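/- Consider a quantum secret sharing scheme W_N on shares N = {1,…,n} encoding states on H, realized as a pure-state scheme. Suppose X, Y ⊆ N are disjoint, X ∪ Y is qualified (W_{X∪Y} is reversible on all states) and Y is forbidden (W_Y is constant on all states). Then for every probability measure μ supported on pure states of H with barycenter σ_μ, one has H(σ_μ) ≤ H(W_X(σ_μ)) − E_μ[H_ρ(W_X | W_Y)], where H_ρ(W_X|W_Y) = H(W_{X∪Y}(ρ)) − H(W_Y(ρ)). -/

import Mathlib

open Matrix
open scoped ComplexOrder

noncomputable section

/-- A density operator: positive semidefinite with unit trace. -/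
def IsDensity {n : Type*} [Fintype n] (ρ : Matrix n n ℂ) : Prop :=
  ρ.PosSemidef ∧ ρ.trace = 1

/-- A pure state: a density operator that is a (rank-one) projection. -/
def IsPure {n : Type*} [Fintype n] (ρ : Matrix n n ℂ) : Prop :=
  IsDensity ρ ∧ ρ * ρ = ρ

/-- A quantum channel (CPTP map), characterized by a Kraus representation. -/
def IsCPTP {n m : Type*} [Fintype n] [DecidableEq n] [Fintype m]
    (E : Matrix n n ℂ →ₗ[ℂ] Matrix m m ℂ) : Prop :=
  ∃ (N : ℕ) (K : Fin N → Matrix m n ℂ),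
    (∀ ρ, E ρ = ∑ a, K a * ρ * (K a)ᴴ) ∧ ∑ a, (K a)ᴴ * K a = 1

/-- The von Neumann entropy `H(ρ) = -Tr[ρ log ρ]`, via the eigenvalues. -/
def vnEntropy {n : Type*} [Fintype n] [DecidableEq n] (ρ : Matrix n n ℂ) : ℝ :=
  if h : ρ.IsHermitian then ∑ i, Real.negMulLog (h.eigenvalues i) else 0

/-- The matrix (spectral) logarithm of a Hermitian matrix. -/
def matLog {n : Type*} [Fintype n] [DecidableEq n] (ρ : Matrix n n ℂ) : Matrix n n ℂ :=
  if h : ρ.IsHermitian then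
    (h.eigenvectorUnitary : Matrix n n ℂ) *
      diagonal (fun i => (Real.log (h.eigenvalues i) : ℂ)) *
      star (h.eigenvectorUnitary : Matrix n n ℂ)
  else 0

/-- The quantum relative entropy `D(ρ‖σ) = Tr[ρ (log ρ - log σ)]`. -/
def relEntropy {n : Type*} [Fintype n] [DecidableEq n] (ρ σ : Matrix n n ℂ) : ℝ :=
  ((ρ * (matLog ρ - matLog σ)).trace).re
variable {nn : ℕ} {d : Fin nn → Type} [∀ i, Fintype (d i)] [∀ i, DecidableEq (d i)]
variable {H : Type} [Fintype H] [DecidableEq H]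

/-- Combine an assignment on a subset `X` of shares with one on its complement. -/
def mergeFun (X : Finset (Fin nn)) (f : (i : {i // i ∈ X}) → d i)
    (z : (i : {i // i ∉ X}) → d i) : (i : Fin nn) → d i :=
  fun i => if h : i ∈ X then f ⟨i, h⟩ else z ⟨i, h⟩

/-- Partial trace onto the subsystem given by the subset `X` of shares
(tracing out the shares in the complement of `X`). -/
def ptraceSubset (X : Finset (Fin nn))
    (M : Matrix ((i : Fin nn) → d i) ((i : Fin nn) → d i) ℂ) :
    Matrix ((i : {i // i ∈ X}) → d i) ((i : {i // i ∈ X}) → d i) ℂ :=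
  fun f g => ∑ z : (i : {i // i ∉ X}) → d i, M (mergeFun X f z) (mergeFun X g z)

/-- A subset `X` of shares is qualified: the reduced channel `W_X` is reversible on all
density operators, i.e. the original state can be perfectly recovered from `X`. -/
def Qualified (W : Matrix H H ℂ →ₗ[ℂ] Matrix ((i : Fin nn) → d i) ((i : Fin nn) → d i) ℂ)
    (X : Finset (Fin nn)) : Prop :=
  ∃ R : Matrix ((i : {i // i ∈ X}) → d i) ((i : {i // i ∈ X}) → d i) ℂ →ₗ[ℂ] Matrix H H ℂ,
    IsCPTP R ∧ ∀ ρ : Matrix H H ℂ, IsDensity ρ → R (ptraceSubset X (W ρ)) = ρ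

/-- A subset `X` of shares is forbidden: the reduced channel `W_X` is vanishing
(constant) on all density operators, i.e. `X` has no information on the state. -/
def Forbidden (W : Matrix H H ℂ →ₗ[ℂ] Matrix ((i : Fin nn) → d i) ((i : Fin nn) → d i) ℂ)
    (X : Finset (Fin nn)) : Prop :=
  ∃ ρ₀, IsDensity ρ₀ ∧ ∀ ρ : Matrix H H ℂ, IsDensity ρ → ptraceSubset X (W ρ) = ρ₀

/-- A `(k, L, n)`-threshold ramp quantum secret sharing scheme: a channel from states
on `H` into the `n`-share system such that a subset `X` is qualified iff `|X| ≥ k` and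
forbidden iff `|X| ≤ k - L`. -/
def IsRampQSS (k L : ℕ)
    (W : Matrix H H ℂ →ₗ[ℂ] Matrix ((i : Fin nn) → d i) ((i : Fin nn) → d i) ℂ) : Prop :=
  IsCPTP W ∧
    (∀ X : Finset (Fin nn), Qualified W X ↔ k ≤ X.card) ∧
    (∀ X : Finset (Fin nn), Forbidden W X ↔ X.card ≤ k - L)

/-!
If `R` reverses `W_{X∪Y}`, the Kraus operators of `R ∘ W_{X∪Y}` are multiples of `1`, so those of
`W_{X∪Y}` satisfy `K_zᴴ K_w = c_{zw} 1` (Knill–Laflamme). Hence `W_{X∪Y}(ρ)` has the same nonzero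
spectrum as `c ⊗ ρ`, and `H(W_{X∪Y}(ρ)) = H(c) + H(ρ)`: a qualified set preserves the Holevo
information of every ensemble. On the forbidden set `Y` the Holevo information vanishes.
Subtracting one identity from the other and bounding `H(W_{X∪Y}(σ)) - H(W_Y(σ))` by `H(W_X(σ))`
with subadditivity gives the inequality.
-/

section Gibbs

lemma negMulLog_le_neg_mul_log_add_sub {x y : ℝ} (hx : 0 ≤ x) (hy : 0 ≤ y)
    (hxy : y = 0 → x = 0) : Real.negMulLog x ≤ -x * Real.log y + (y - x) := by
  rcases hx.eq_or_lt with rfl | hx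
  · simpa using hy
  have hy : 0 < y := hy.lt_of_ne fun h => hx.ne' (hxy h.symm)
  have hlog : x * Real.log (y / x) ≤ x * (y / x - 1) :=
    mul_le_mul_of_nonneg_left (Real.log_le_sub_one_of_pos (div_pos hy hx)) hx.le
  rw [Real.log_div hy.ne' hx.ne', mul_sub_one, mul_div_cancel₀ _ hx.ne'] at hlog
  rw [Real.negMulLog]
  linarith

lemma sum_negMulLog_le_crossEntropy {κ : Type*} [Fintype κ] {p q : κ → ℝ} (hp : ∀ i, 0 ≤ p i)
    (hq : ∀ i, 0 ≤ q i) (hpq : ∀ i, q i = 0 → p i = 0) (hsum : ∑ i, q i ≤ ∑ i, p i) :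
    ∑ i, Real.negMulLog (p i) ≤ ∑ i, -p i * Real.log (q i) := by
  calc ∑ i, Real.negMulLog (p i)
      ≤ ∑ i, (-p i * Real.log (q i) + (q i - p i)) := Finset.sum_le_sum fun i _ =>
        negMulLog_le_neg_mul_log_add_sub (hp i) (hq i) (hpq i)
    _ = ∑ i, -p i * Real.log (q i) + (∑ i, q i - ∑ i, p i) := by
        rw [Finset.sum_add_distrib, Finset.sum_sub_distrib]
    _ ≤ ∑ i, -p i * Real.log (q i) := by linarith

lemma sum_negMulLog_le_sum_marginals {α β : Type*} [Fintype α] [Fintype β] {q : α × β → ℝ}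
    (hq : ∀ x, 0 ≤ q x) (hsum : ∑ x, q x = 1) :
    ∑ x, Real.negMulLog (q x) ≤
      ∑ a, Real.negMulLog (∑ b, q (a, b)) + ∑ b, Real.negMulLog (∑ a, q (a, b)) := by
  set qA : α → ℝ := fun a => ∑ b, q (a, b)
  set qB : β → ℝ := fun b => ∑ a, q (a, b)
  have hA : ∀ x, q x ≤ qA x.1 := fun x =>
    Finset.single_le_sum (f := fun b => q (x.1, b)) (fun b _ => hq _) (Finset.mem_univ x.2)
  have hB : ∀ x, q x ≤ qB x.2 := fun x =>
    Finset.single_le_sum (f := fun a => q (a, x.2)) (fun a _ => hq _) (Finset.mem_univ x.1)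
  have hAB : ∀ x, qA x.1 * qB x.2 = 0 → q x = 0 := fun x h =>
    (mul_eq_zero.1 h).elim (fun h => (h ▸ hA x).antisymm (hq x))
      (fun h => (h ▸ hB x).antisymm (hq x))
  have hprod : ∑ x : α × β, qA x.1 * qB x.2 = ∑ x, q x := by
    rw [Fintype.sum_prod_type, ← Fintype.sum_mul_sum, ← Fintype.sum_prod_type,
      ← Fintype.sum_prod_type_right, hsum, mul_one]
  calc ∑ x, Real.negMulLog (q x)
      ≤ ∑ x, -q x * Real.log (qA x.1 * qB x.2) :=
        sum_negMulLog_le_crossEntropy hq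
          (fun x => mul_nonneg ((hq x).trans (hA x)) ((hq x).trans (hB x))) hAB hprod.le
    _ = ∑ x, (-q x * Real.log (qA x.1) + -q x * Real.log (qB x.2)) := by
        refine Finset.sum_congr rfl fun x _ => ?_
        by_cases hx : qA x.1 * qB x.2 = 0
        · simp [hAB x hx]
        · rw [Real.log_mul (left_ne_zero_of_mul hx) (right_ne_zero_of_mul hx), mul_add]
    _ = ∑ a, Real.negMulLog (qA a) + ∑ b, Real.negMulLog (qB b) := by
        rw [Finset.sum_add_distrib, Fintype.sum_prod_type, Fintype.sum_prod_type_right]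
        simp only [← Finset.sum_mul, Finset.sum_neg_distrib, Real.negMulLog, qA, qB]

end Gibbs

section Entropy

open scoped Kronecker

variable {m n : Type*} [Fintype m] [Fintype n] [DecidableEq m] [DecidableEq n]

lemma vnEntropy_eq_sum_eigenvalues {ρ : Matrix n n ℂ} (hρ : ρ.IsHermitian) :
    vnEntropy ρ = ∑ i, Real.negMulLog (hρ.eigenvalues i) :=
  dif_pos hρ

lemma vnEntropy_eq_sum_roots_charpoly {ρ : Matrix n n ℂ} (hρ : ρ.IsHermitian) :
    vnEntropy ρ = (ρ.charpoly.roots.map fun z => Real.negMulLog z.re).sum := by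
  rw [vnEntropy_eq_sum_eigenvalues hρ, hρ.roots_charpoly_eq_eigenvalues, Multiset.map_map]
  rfl

lemma vnEntropy_diagonal (l : n → ℝ) :
    vnEntropy (diagonal fun i => (l i : ℂ)) = ∑ i, Real.negMulLog (l i) := by
  rw [vnEntropy_eq_sum_roots_charpoly
      (isHermitian_diagonal_of_self_adjoint _ (by ext i; simp)), charpoly_diagonal,
    Polynomial.roots_prod _ _ (Finset.prod_ne_zero_iff.2 fun i _ => Polynomial.X_sub_C_ne_zero _)]
  simp

lemma vnEntropy_reindex (e : m ≃ n) {ρ : Matrix m m ℂ} (hρ : ρ.IsHermitian) :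
    vnEntropy (reindex e e ρ) = vnEntropy ρ := by
  have hρe : (reindex e e ρ).IsHermitian := hρ.submatrix e.symm
  rw [vnEntropy_eq_sum_roots_charpoly hρ, vnEntropy_eq_sum_roots_charpoly hρe, charpoly_reindex]

lemma vnEntropy_unitary_conj {U ρ : Matrix n n ℂ} (hU : U ∈ unitaryGroup n ℂ)
    (hρ : ρ.IsHermitian) : vnEntropy (Uᴴ * ρ * U) = vnEntropy ρ := by
  rw [vnEntropy_eq_sum_roots_charpoly hρ,
    vnEntropy_eq_sum_roots_charpoly (isHermitian_conjTranspose_mul_mul U hρ), mul_assoc,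
    charpoly_mul_comm, mul_assoc, ← star_eq_conjTranspose, mem_unitaryGroup_iff.1 hU, mul_one]

lemma vnEntropy_mul_conjTranspose_self (M : Matrix m n ℂ) :
    vnEntropy (M * Mᴴ) = vnEntropy (Mᴴ * M) := by
  have hX (k : ℕ) : (Polynomial.X ^ k : Polynomial ℂ) ≠ 0 := pow_ne_zero k Polynomial.X_ne_zero
  have hroots := congrArg (fun P : Polynomial ℂ => (P.roots.map fun z => Real.negMulLog z.re).sum)
    (charpoly_mul_comm' M Mᴴ)
  rw [Polynomial.roots_mul (mul_ne_zero (hX _) (charpoly_monic _).ne_zero),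
    Polynomial.roots_mul (mul_ne_zero (hX _) (charpoly_monic _).ne_zero)] at hroots
  rw [vnEntropy_eq_sum_roots_charpoly (isHermitian_mul_conjTranspose_self M),
    vnEntropy_eq_sum_roots_charpoly (isHermitian_conjTranspose_mul_self M)]
  simpa [Multiset.map_nsmul, Multiset.sum_nsmul] using hroots

lemma vnEntropy_eq_zero_of_isIdempotentElem {ρ : Matrix n n ℂ} (hρ : ρ.IsHermitian)
    (hidem : IsIdempotentElem ρ) : vnEntropy ρ = 0 := by
  rw [vnEntropy_eq_sum_eigenvalues hρ]
  refine Finset.sum_eq_zero fun i _ => ?_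
  rcases hidem.spectrum_subset ℝ (hρ.eigenvalues_mem_spectrum_real i) with h | h <;> simp_all

lemma conjTranspose_eigenvectorUnitary_mul_mul {ρ : Matrix n n ℂ} (hρ : ρ.IsHermitian) :
    (hρ.eigenvectorUnitary : Matrix n n ℂ)ᴴ * ρ * hρ.eigenvectorUnitary =
      diagonal fun i => (hρ.eigenvalues i : ℂ) := by
  have h := hρ.conjStarAlgAut_star_eigenvectorUnitary
  rwa [Unitary.conjStarAlgAut_star_apply] at h

lemma re_trace_eq_sum_eigenvalues {ρ : Matrix n n ℂ} (hρ : ρ.IsHermitian) :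
    ρ.trace.re = ∑ i, hρ.eigenvalues i := by
  simp [hρ.trace_eq_sum_eigenvalues]

lemma vnEntropy_kronecker {ρ : Matrix m m ℂ} {σ : Matrix n n ℂ} (hρ : ρ.IsHermitian)
    (hσ : σ.IsHermitian) :
    vnEntropy (ρ ⊗ₖ σ) = σ.trace.re * vnEntropy ρ + ρ.trace.re * vnEntropy σ := by
  set U := (hρ.eigenvectorUnitary : Matrix m m ℂ)
  set V := (hσ.eigenvectorUnitary : Matrix n n ℂ)
  have hUV : U ⊗ₖ V ∈ unitaryGroup (m × n) ℂ :=
    kronecker_mem_unitary hρ.eigenvectorUnitary.2 hσ.eigenvectorUnitary.2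
  have hdiag : (U ⊗ₖ V)ᴴ * (ρ ⊗ₖ σ) * (U ⊗ₖ V) =
      diagonal fun x => ((hρ.eigenvalues x.1 * hσ.eigenvalues x.2 : ℝ) : ℂ) := by
    rw [conjTranspose_kronecker, ← mul_kronecker_mul, ← mul_kronecker_mul,
      conjTranspose_eigenvectorUnitary_mul_mul, conjTranspose_eigenvectorUnitary_mul_mul,
      diagonal_kronecker_diagonal]
    simp only [Complex.ofReal_mul]
  have hherm : (ρ ⊗ₖ σ).IsHermitian := by
    rw [IsHermitian, conjTranspose_kronecker, hρ, hσ]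
  rw [← vnEntropy_unitary_conj hUV hherm, hdiag, vnEntropy_diagonal,
    vnEntropy_eq_sum_eigenvalues hρ, vnEntropy_eq_sum_eigenvalues hσ,
    re_trace_eq_sum_eigenvalues hρ, re_trace_eq_sum_eigenvalues hσ, Finset.sum_mul_sum,
    Finset.sum_mul_sum, Fintype.sum_prod_type, Finset.sum_comm (s := Finset.univ (α := n))]
  simp only [Real.negMulLog_mul, Finset.sum_add_distrib]

end Entropy

section Peierls

variable {𝕜 n : Type*} [RCLike 𝕜] [Fintype n] [DecidableEq n]

lemma sum_norm_sq_row_eq_one {U : Matrix n n 𝕜} (hU : U ∈ unitaryGroup n 𝕜) (i : n) :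
    ∑ k, ‖U i k‖ ^ 2 = 1 := by
  have h := congrFun₂ (mem_unitaryGroup_iff.1 hU) i i
  simp only [star_eq_conjTranspose, mul_apply, conjTranspose_apply, RCLike.star_def,
    RCLike.mul_conj, one_apply_eq] at h
  exact_mod_cast h

lemma sum_norm_sq_col_eq_one {U : Matrix n n 𝕜} (hU : U ∈ unitaryGroup n 𝕜) (k : n) :
    ∑ i, ‖U i k‖ ^ 2 = 1 := by
  simpa using sum_norm_sq_row_eq_one (Unitary.star_mem hU) k

lemma re_apply_self_eq_sum_eigenvalues {A : Matrix n n 𝕜} (hA : A.IsHermitian) (i : n) :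
    RCLike.re (A i i) =
      ∑ k, ‖(hA.eigenvectorUnitary : Matrix n n 𝕜) i k‖ ^ 2 * hA.eigenvalues k := by
  conv_lhs => rw [hA.spectral_theorem, Unitary.conjStarAlgAut_apply]
  rw [mul_apply, map_sum]
  refine Finset.sum_congr rfl fun k _ => ?_
  rw [mul_diagonal, star_apply, RCLike.star_def, mul_right_comm, RCLike.mul_conj,
    Function.comp_apply]
  norm_cast

-- The diagonal is the image of the spectrum under the doubly stochastic matrix `‖U i k‖ ^ 2`.
lemma sum_map_eigenvalues_le_sum_map_diag {A : Matrix n n 𝕜} (hA : A.IsHermitian) {s : Set ℝ}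
    {f : ℝ → ℝ} (hf : ConcaveOn ℝ s f) (hs : ∀ k, hA.eigenvalues k ∈ s) :
    ∑ k, f (hA.eigenvalues k) ≤ ∑ i, f (RCLike.re (A i i)) := by
  set U := (hA.eigenvectorUnitary : Matrix n n 𝕜)
  have hU : U ∈ unitaryGroup n 𝕜 := hA.eigenvectorUnitary.2
  calc ∑ k, f (hA.eigenvalues k)
      = ∑ i, ∑ k, ‖U i k‖ ^ 2 * f (hA.eigenvalues k) := by
        simp only [Finset.sum_comm (s := Finset.univ (α := n)), ← Finset.sum_mul]
        simp only [sum_norm_sq_col_eq_one hU, one_mul]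
    _ ≤ ∑ i, f (∑ k, ‖U i k‖ ^ 2 * hA.eigenvalues k) := Finset.sum_le_sum fun i _ =>
        hf.le_map_sum (fun k _ => sq_nonneg _) (sum_norm_sq_row_eq_one hU i) fun k _ => hs k
    _ = ∑ i, f (RCLike.re (A i i)) := by simp only [re_apply_self_eq_sum_eigenvalues hA, U]

lemma vnEntropy_le_sum_negMulLog_diag {ρ : Matrix n n ℂ} (hρ : ρ.PosSemidef) :
    vnEntropy ρ ≤ ∑ i, Real.negMulLog (ρ i i).re := by
  rw [vnEntropy_eq_sum_eigenvalues hρ.isHermitian]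
  exact sum_map_eigenvalues_le_sum_map_diag hρ.isHermitian Real.concaveOn_negMulLog
    hρ.eigenvalues_nonneg

end Peierls

section Density

variable {m n : Type*} [Fintype m] [Fintype n]

lemma IsDensity.reindex (e : n ≃ m) {ρ : Matrix n n ℂ} (hρ : IsDensity ρ) :
    IsDensity (Matrix.reindex e e ρ) :=
  ⟨hρ.1.submatrix e.symm, (Equiv.sum_comp e.symm fun i => ρ i i).trans hρ.2⟩

lemma IsDensity.sum_smul {ι : Type*} [Fintype ι] {p : ι → ℝ} (hp : ∀ i, 0 ≤ p i)
    (hp1 : ∑ i, p i = 1) {ρs : ι → Matrix n n ℂ} (hρs : ∀ i, IsDensity (ρs i)) :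
    IsDensity (∑ i, p i • ρs i) := by
  refine ⟨posSemidef_sum _ fun i _ => (hρs i).1.smul (hp i), ?_⟩
  simp only [trace_sum, trace_smul, (hρs _).2, Complex.real_smul, mul_one]
  exact_mod_cast hp1

open scoped MatrixOrder Matrix.Norms.L2Operator in
lemma linearMap_ext_of_isDensity {M : Type*} [AddCommGroup M] [Module ℂ M]
    {f g : Matrix n n ℂ →ₗ[ℂ] M} (h : ∀ ρ, IsDensity ρ → f ρ = g ρ) : f = g := by
  classical
  refine LinearMap.ext_on CStarAlgebra.span_nonneg fun A hA => ?_
  have hA : A.PosSemidef := nonneg_iff_posSemidef.1 hA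
  by_cases htr : A.trace = 0
  · rw [hA.trace_eq_zero_iff.1 htr, map_zero, map_zero]
  · have hdensity : IsDensity (A.trace⁻¹ • A) :=
      ⟨hA.smul (inv_nonneg.2 hA.trace_nonneg), by simp [htr]⟩
    simpa [htr] using h _ hdensity

end Density

section PartialTrace

open scoped Kronecker

/-- The partial trace `Tr_β` on operators of a bipartite system `α × β`, keeping the left
factor. -/
def traceRight {R α β : Type*} [Semiring R] [Fintype β] :
    Matrix (α × β) (α × β) R →ₗ[R] Matrix α α R where
  toFun M := ∑ b, M.submatrix (·, b) (·, b)
  map_add' M N := by ext; simp [Matrix.sum_apply, Finset.sum_add_distrib]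
  map_smul' c M := by ext; simp [Matrix.sum_apply, Finset.mul_sum]

/-- The partial trace `Tr_α` on operators of a bipartite system `α × β`, keeping the right
factor. -/
def traceLeft {R α β : Type*} [Semiring R] [Fintype α] :
    Matrix (α × β) (α × β) R →ₗ[R] Matrix β β R where
  toFun M := ∑ a, M.submatrix (a, ·) (a, ·)
  map_add' M N := by ext; simp [Matrix.sum_apply, Finset.sum_add_distrib]
  map_smul' c M := by ext; simp [Matrix.sum_apply, Finset.mul_sum]

section Semiring

variable {R α β : Type*} [Semiring R]

lemma traceRight_apply [Fintype β] (M : Matrix (α × β) (α × β) R) (a a' : α) :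
    traceRight M a a' = ∑ b, M (a, b) (a', b) :=
  Matrix.sum_apply ..

lemma traceLeft_apply [Fintype α] (M : Matrix (α × β) (α × β) R) (b b' : β) :
    traceLeft M b b' = ∑ a, M (a, b) (a, b') :=
  Matrix.sum_apply ..

variable [Fintype α] [Fintype β]

lemma trace_traceRight (M : Matrix (α × β) (α × β) R) : (traceRight M).trace = M.trace := by
  simp only [trace, diag_apply, traceRight_apply, Fintype.sum_prod_type]

lemma trace_mul_traceRight [DecidableEq β] (A : Matrix α α R) (M : Matrix (α × β) (α × β) R) :
    (A * traceRight M).trace = ((A ⊗ₖ 1) * M).trace := by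
  simp only [trace, diag_apply, mul_apply, traceRight_apply, Fintype.sum_prod_type,
    kroneckerMap_apply, one_apply, mul_ite, mul_one, mul_zero, ite_mul, zero_mul,
    Finset.sum_ite_eq, Finset.mem_univ, if_true, Finset.mul_sum]
  exact Finset.sum_congr rfl fun a _ => Finset.sum_comm

lemma trace_mul_traceLeft [DecidableEq α] (B : Matrix β β R) (M : Matrix (α × β) (α × β) R) :
    (B * traceLeft M).trace = ((1 ⊗ₖ B) * M).trace := by
  simp only [trace, diag_apply, mul_apply, traceLeft_apply, Fintype.sum_prod_type_right,
    kroneckerMap_apply, one_apply, ite_mul, one_mul, zero_mul,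
    Finset.sum_ite_eq, Finset.mem_univ, if_true, Finset.mul_sum]
  exact Finset.sum_congr rfl fun b _ => Finset.sum_comm

end Semiring

section CommRing

variable {R α β : Type*} [CommRing R] [StarRing R] [Fintype α] [Fintype β] [DecidableEq α]
  [DecidableEq β]

omit [DecidableEq α] in
lemma traceRight_kronecker_conj (U : Matrix α α R) {V : Matrix β β R}
    (hV : V ∈ unitaryGroup β R) (M : Matrix (α × β) (α × β) R) :
    traceRight ((U ⊗ₖ V)ᴴ * M * (U ⊗ₖ V)) = Uᴴ * traceRight M * U := by
  refine ext_iff_trace_mul_left.2 fun A => ?_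
  calc (A * traceRight ((U ⊗ₖ V)ᴴ * M * (U ⊗ₖ V))).trace
      = (((U ⊗ₖ V) * (A ⊗ₖ 1) * (U ⊗ₖ V)ᴴ) * M).trace := by
        rw [trace_mul_traceRight, ← mul_assoc, trace_mul_comm]
        simp only [mul_assoc]
    _ = (((U * A * Uᴴ) ⊗ₖ 1) * M).trace := by
        rw [conjTranspose_kronecker, ← mul_kronecker_mul, ← mul_kronecker_mul, mul_one,
          ← star_eq_conjTranspose V, mem_unitaryGroup_iff.1 hV]
    _ = (A * (Uᴴ * traceRight M * U)).trace := by
        rw [← trace_mul_traceRight, mul_assoc, mul_assoc, trace_mul_comm]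
        simp only [mul_assoc]

omit [DecidableEq β] in
lemma traceLeft_kronecker_conj {U : Matrix α α R} (hU : U ∈ unitaryGroup α R)
    (V : Matrix β β R) (M : Matrix (α × β) (α × β) R) :
    traceLeft ((U ⊗ₖ V)ᴴ * M * (U ⊗ₖ V)) = Vᴴ * traceLeft M * V := by
  refine ext_iff_trace_mul_left.2 fun B => ?_
  calc (B * traceLeft ((U ⊗ₖ V)ᴴ * M * (U ⊗ₖ V))).trace
      = (((U ⊗ₖ V) * (1 ⊗ₖ B) * (U ⊗ₖ V)ᴴ) * M).trace := by
        rw [trace_mul_traceLeft, ← mul_assoc, trace_mul_comm]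
        simp only [mul_assoc]
    _ = ((1 ⊗ₖ (V * B * Vᴴ)) * M).trace := by
        rw [conjTranspose_kronecker, ← mul_kronecker_mul, ← mul_kronecker_mul, mul_one,
          ← star_eq_conjTranspose U, mem_unitaryGroup_iff.1 hU]
    _ = (B * (Vᴴ * traceLeft M * V)).trace := by
        rw [← trace_mul_traceLeft, mul_assoc, mul_assoc, trace_mul_comm]
        simp only [mul_assoc]

end CommRing

variable {α β : Type*} [Fintype α] [Fintype β]

omit [Fintype α] in
lemma posSemidef_traceRight {ρ : Matrix (α × β) (α × β) ℂ} (hρ : ρ.PosSemidef) :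
    (traceRight ρ).PosSemidef :=
  posSemidef_sum _ fun b _ => hρ.submatrix (·, b)

omit [Fintype β] in
lemma posSemidef_traceLeft {ρ : Matrix (α × β) (α × β) ℂ} (hρ : ρ.PosSemidef) :
    (traceLeft ρ).PosSemidef :=
  posSemidef_sum _ fun a _ => hρ.submatrix (a, ·)

lemma IsDensity.traceRight {ρ : Matrix (α × β) (α × β) ℂ} (hρ : IsDensity ρ) :
    IsDensity (traceRight ρ) :=
  ⟨posSemidef_traceRight hρ.1, (trace_traceRight ρ).trans hρ.2⟩

variable [DecidableEq α] [DecidableEq β]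

lemma vnEntropy_le_sum_negMulLog_diag_partialTraces {ρ : Matrix (α × β) (α × β) ℂ}
    (hρ : IsDensity ρ) :
    vnEntropy ρ ≤ ∑ a, Real.negMulLog (traceRight ρ a a).re +
      ∑ b, Real.negMulLog (traceLeft ρ b b).re := by
  have hnonneg : ∀ x, 0 ≤ (ρ x x).re := fun x => (Complex.le_def.1 hρ.1.diag_nonneg).1
  have hsum : ∑ x, (ρ x x).re = 1 := by
    rw [← Complex.re_sum]
    exact congrArg Complex.re hρ.2
  simp only [traceRight_apply, traceLeft_apply, Complex.re_sum]
  exact (vnEntropy_le_sum_negMulLog_diag hρ.1).trans (sum_negMulLog_le_sum_marginals hnonneg hsum)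

-- Rotating by eigenbases of both marginals makes them diagonal without changing any entropy.
theorem vnEntropy_le_vnEntropy_traceRight_add_vnEntropy_traceLeft
    {ρ : Matrix (α × β) (α × β) ℂ} (hρ : IsDensity ρ) :
    vnEntropy ρ ≤ vnEntropy (traceRight ρ) + vnEntropy (traceLeft ρ) := by
  have hA : (traceRight ρ).IsHermitian := (posSemidef_traceRight hρ.1).isHermitian
  have hB : (traceLeft ρ).IsHermitian := (posSemidef_traceLeft hρ.1).isHermitian
  set U := (hA.eigenvectorUnitary : Matrix α α ℂ)
  set V := (hB.eigenvectorUnitary : Matrix β β ℂ)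
  have hU : U ∈ unitaryGroup α ℂ := hA.eigenvectorUnitary.2
  have hV : V ∈ unitaryGroup β ℂ := hB.eigenvectorUnitary.2
  have hUV : U ⊗ₖ V ∈ unitaryGroup (α × β) ℂ := kronecker_mem_unitary hU hV
  have hrot : IsDensity ((U ⊗ₖ V)ᴴ * ρ * (U ⊗ₖ V)) := by
    refine ⟨hρ.1.conjTranspose_mul_mul_same _, ?_⟩
    rw [trace_mul_comm, ← mul_assoc, ← star_eq_conjTranspose, mem_unitaryGroup_iff.1 hUV,
      one_mul, hρ.2]
  have h := vnEntropy_le_sum_negMulLog_diag_partialTraces hrot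
  rw [vnEntropy_unitary_conj hUV hρ.1.isHermitian, traceRight_kronecker_conj U hV,
    traceLeft_kronecker_conj hU V, conjTranspose_eigenvectorUnitary_mul_mul hA,
    conjTranspose_eigenvectorUnitary_mul_mul hB] at h
  simpa only [diagonal_apply_eq, Complex.ofReal_re, ← vnEntropy_eq_sum_eigenvalues] using h

end PartialTrace

section Shares

open scoped Kronecker

omit [∀ i, DecidableEq (d i)] in
lemma ptraceSubset_eq_traceRight (X : Finset (Fin nn))
    (M : Matrix ((i : Fin nn) → d i) ((i : Fin nn) → d i) ℂ) :
    ptraceSubset X M = traceRight (reindex (Equiv.piEquivPiSubtypeProd (· ∈ X) d)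
      (Equiv.piEquivPiSubtypeProd (· ∈ X) d) M) := by
  ext f g
  rw [traceRight_apply]
  rfl

omit [∀ i, DecidableEq (d i)] in
lemma IsDensity.ptraceSubset (X : Finset (Fin nn))
    {ρ : Matrix ((i : Fin nn) → d i) ((i : Fin nn) → d i) ℂ} (hρ : IsDensity ρ) :
    IsDensity (ptraceSubset X ρ) := by
  rw [ptraceSubset_eq_traceRight]
  exact (hρ.reindex _).traceRight

/-- The operator `A ⊗ 1` acting as `A` on the shares in `X` and trivially on the others. -/
def extendByOne (X : Finset (Fin nn))
    (A : Matrix ((i : {i // i ∈ X}) → d i) ((i : {i // i ∈ X}) → d i) ℂ) :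
    Matrix ((i : Fin nn) → d i) ((i : Fin nn) → d i) ℂ :=
  reindex (Equiv.piEquivPiSubtypeProd (· ∈ X) d).symm
    (Equiv.piEquivPiSubtypeProd (· ∈ X) d).symm (A ⊗ₖ 1)

lemma trace_reindex_mul {R m n : Type*} [NonUnitalNonAssocSemiring R] [Fintype m]
    [Fintype n] (e : m ≃ n) (A : Matrix m m R) (B : Matrix n n R) :
    (reindex e e A * B).trace = (A * reindex e.symm e.symm B).trace := by
  rw [trace, ← Equiv.sum_comp e]
  refine Finset.sum_congr rfl fun i _ => ?_
  simp only [diag_apply, mul_apply, reindex_apply, submatrix_apply, Equiv.symm_symm]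
  rw [← Equiv.sum_comp e]
  simp

lemma trace_mul_ptraceSubset (X : Finset (Fin nn))
    (A : Matrix ((i : {i // i ∈ X}) → d i) ((i : {i // i ∈ X}) → d i) ℂ)
    (M : Matrix ((i : Fin nn) → d i) ((i : Fin nn) → d i) ℂ) :
    (A * ptraceSubset X M).trace = (extendByOne X A * M).trace := by
  rw [ptraceSubset_eq_traceRight, trace_mul_traceRight, extendByOne, trace_reindex_mul,
    Equiv.symm_symm]

lemma piFinsetUnion_symm_apply {ι : Type*} [DecidableEq ι] {α : ι → Type*} {s t : Finset ι}
    (h : Disjoint s t) (f : ∀ i : {i // i ∈ s ∪ t}, α i) :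
    (Equiv.piFinsetUnion α h).symm f =
      (fun i : {i // i ∈ s} => f ⟨i, Finset.mem_union_left t i.2⟩,
        fun i : {i // i ∈ t} => f ⟨i, Finset.mem_union_right s i.2⟩) :=
  rfl

omit [∀ i, Fintype (d i)] in
lemma extendByOne_union_kronecker_one {X Y : Finset (Fin nn)} (hXY : Disjoint X Y)
    (A : Matrix ((i : {i // i ∈ X}) → d i) ((i : {i // i ∈ X}) → d i) ℂ) :
    extendByOne (X ∪ Y) (reindex (Equiv.piFinsetUnion d hXY) (Equiv.piFinsetUnion d hXY)
      (A ⊗ₖ (1 : Matrix ((i : {i // i ∈ Y}) → d i) ((i : {i // i ∈ Y}) → d i) ℂ))) =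
      extendByOne X A := by
  have hdisj := Finset.disjoint_left.1 hXY
  ext x y
  simp only [extendByOne, reindex_apply, submatrix_apply, kroneckerMap_apply, one_apply,
    piFinsetUnion_symm_apply, Equiv.symm_symm, Equiv.piEquivPiSubtypeProd_apply,
    ← ite_and, mul_ite, mul_one, mul_zero, funext_iff, Subtype.forall, Finset.mem_union]
  refine if_congr ?_ rfl rfl
  grind

omit [∀ i, Fintype (d i)] in
lemma extendByOne_union_one_kronecker {X Y : Finset (Fin nn)} (hXY : Disjoint X Y)
    (B : Matrix ((i : {i // i ∈ Y}) → d i) ((i : {i // i ∈ Y}) → d i) ℂ) :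
    extendByOne (X ∪ Y) (reindex (Equiv.piFinsetUnion d hXY) (Equiv.piFinsetUnion d hXY)
      ((1 : Matrix ((i : {i // i ∈ X}) → d i) ((i : {i // i ∈ X}) → d i) ℂ) ⊗ₖ B)) =
      extendByOne Y B := by
  have hdisj := Finset.disjoint_left.1 hXY
  ext x y
  simp only [extendByOne, reindex_apply, submatrix_apply, kroneckerMap_apply, one_apply,
    piFinsetUnion_symm_apply, Equiv.symm_symm, Equiv.piEquivPiSubtypeProd_apply,
    ← ite_and, ite_mul, one_mul, zero_mul, mul_ite, mul_one, mul_zero, funext_iff,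
    Subtype.forall, Finset.mem_union]
  refine if_congr ?_ rfl rfl
  grind

omit [∀ i, DecidableEq (d i)] in
lemma traceRight_ptraceSubset_union {X Y : Finset (Fin nn)} (hXY : Disjoint X Y)
    (M : Matrix ((i : Fin nn) → d i) ((i : Fin nn) → d i) ℂ) :
    traceRight (reindex (Equiv.piFinsetUnion d hXY).symm (Equiv.piFinsetUnion d hXY).symm
      (ptraceSubset (X ∪ Y) M)) = ptraceSubset X M := by
  classical
  refine ext_iff_trace_mul_left.2 fun A => ?_
  rw [trace_mul_traceRight, ← trace_reindex_mul, trace_mul_ptraceSubset, trace_mul_ptraceSubset,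
    extendByOne_union_kronecker_one]

omit [∀ i, DecidableEq (d i)] in
lemma traceLeft_ptraceSubset_union {X Y : Finset (Fin nn)} (hXY : Disjoint X Y)
    (M : Matrix ((i : Fin nn) → d i) ((i : Fin nn) → d i) ℂ) :
    traceLeft (reindex (Equiv.piFinsetUnion d hXY).symm (Equiv.piFinsetUnion d hXY).symm
      (ptraceSubset (X ∪ Y) M)) = ptraceSubset Y M := by
  classical
  refine ext_iff_trace_mul_left.2 fun B => ?_
  rw [trace_mul_traceLeft, ← trace_reindex_mul, trace_mul_ptraceSubset, trace_mul_ptraceSubset,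
    extendByOne_union_one_kronecker]

theorem vnEntropy_ptraceSubset_union_le {X Y : Finset (Fin nn)} (hXY : Disjoint X Y)
    {ρ : Matrix ((i : Fin nn) → d i) ((i : Fin nn) → d i) ℂ} (hρ : IsDensity ρ) :
    vnEntropy (ptraceSubset (X ∪ Y) ρ) ≤
      vnEntropy (ptraceSubset X ρ) + vnEntropy (ptraceSubset Y ρ) := by
  have hXYρ : IsDensity (ptraceSubset (X ∪ Y) ρ) := hρ.ptraceSubset _
  have h := vnEntropy_le_vnEntropy_traceRight_add_vnEntropy_traceLeft
    (hXYρ.reindex (Equiv.piFinsetUnion d hXY).symm)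
  rwa [traceRight_ptraceSubset_union, traceLeft_ptraceSubset_union,
    vnEntropy_reindex _ hXYρ.1.isHermitian] at h

end Shares

section KnillLaflamme

open scoped Kronecker

open scoped MatrixOrder in
-- The channel fixes `A`, `Aᴴ`, `A * Aᴴ` and `1`, so `∑ j, [F j, A] * [F j, A]ᴴ = 0`.
lemma commute_of_sum_conj_eq_self {𝕜 κ n : Type*} [RCLike 𝕜] [Fintype κ] [Fintype n]
    {F : κ → Matrix n n 𝕜} (hF : ∀ A, ∑ j, F j * A * (F j)ᴴ = A) (j : κ) (A : Matrix n n 𝕜) :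
    Commute (F j) A := by
  classical
  have hsum : ∑ j, (F j * A - A * F j) * (F j * A - A * F j)ᴴ = 0 := by
    calc ∑ j, (F j * A - A * F j) * (F j * A - A * F j)ᴴ
        = ∑ j, F j * (A * Aᴴ) * (F j)ᴴ - (∑ j, F j * A * (F j)ᴴ) * Aᴴ -
            A * ∑ j, F j * Aᴴ * (F j)ᴴ + A * (∑ j, F j * 1 * (F j)ᴴ) * Aᴴ := by
          simp only [Matrix.mul_sum, Matrix.sum_mul, ← Finset.sum_sub_distrib,
            ← Finset.sum_add_distrib]
          refine Finset.sum_congr rfl fun j _ => ?_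
          rw [conjTranspose_sub, conjTranspose_mul, conjTranspose_mul]
          noncomm_ring
      _ = 0 := by
          simp only [hF]
          noncomm_ring
  have hzero := (Finset.sum_eq_zero_iff_of_nonneg fun j _ =>
    (posSemidef_self_mul_conjTranspose (F j * A - A * F j)).nonneg).1 hsum j (Finset.mem_univ j)
  exact sub_eq_zero.1 (self_mul_conjTranspose_eq_zero.1 hzero)

lemma exists_eq_smul_one_of_sum_conj_eq_self {𝕜 κ n : Type*} [RCLike 𝕜] [Fintype κ] [Fintype n]
    [DecidableEq n] {F : κ → Matrix n n 𝕜} (hF : ∀ A, ∑ j, F j * A * (F j)ᴴ = A) (j : κ) :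
    ∃ t : 𝕜, F j = t • 1 := by
  obtain ⟨t, ht⟩ := mem_range_scalar_of_commute_single fun i k _ =>
    (commute_of_sum_conj_eq_self hF j (single i k 1)).symm
  exact ⟨t, by rw [← ht, smul_one_eq_diagonal, scalar_apply]⟩

variable {𝕜 ι κ m n : Type*} [RCLike 𝕜] [Fintype ι] [Fintype κ] [Fintype m] [Fintype n]
  [DecidableEq m] [DecidableEq n]

lemma exists_conjTranspose_mul_eq_smul_one {R : κ → Matrix n m 𝕜}
    {K : ι → Matrix m n 𝕜} (hR : ∑ a, (R a)ᴴ * R a = 1)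
    (hRK : ∀ A : Matrix n n 𝕜, ∑ a, R a * (∑ z, K z * A * (K z)ᴴ) * (R a)ᴴ = A) :
    ∃ c : Matrix ι ι 𝕜, ∀ z w, (K z)ᴴ * K w = c z w • 1 := by
  have hF : ∀ A : Matrix n n 𝕜, ∑ x : κ × ι, R x.1 * K x.2 * A * (R x.1 * K x.2)ᴴ = A := by
    intro A
    conv_rhs => rw [← hRK A]
    simp only [Fintype.sum_prod_type, Matrix.mul_sum, Matrix.sum_mul, conjTranspose_mul,
      Matrix.mul_assoc]
  choose t ht using exists_eq_smul_one_of_sum_conj_eq_self hF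
  refine ⟨of fun z w => ∑ a, star (t (a, z)) * t (a, w), fun z w => ?_⟩
  calc (K z)ᴴ * K w = (K z)ᴴ * (∑ a, (R a)ᴴ * R a) * K w := by rw [hR, Matrix.mul_one]
    _ = ∑ a, (R a * K z)ᴴ * (R a * K w) := by
        simp only [Matrix.mul_sum, Matrix.sum_mul, conjTranspose_mul, Matrix.mul_assoc]
    _ = ∑ a, (star (t (a, z)) * t (a, w)) • (1 : Matrix n n 𝕜) := by
        simp only [fun a z => ht (a, z), conjTranspose_smul, conjTranspose_one, smul_mul_assoc,
          Matrix.one_mul, smul_smul]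
    _ = _ := by rw [of_apply, Finset.sum_smul]

open scoped MatrixOrder in
-- With `ρ = B * Bᴴ`, the output is `M * Mᴴ` for the block row `M` of the `K z * B`, whereas
-- `Mᴴ * M = c ⊗ₖ (Bᴴ * B)` has the same nonzero spectrum.
lemma vnEntropy_sum_conj_of_conjTranspose_mul_eq_smul_one [DecidableEq ι] {K : ι → Matrix m n ℂ}
    {c : Matrix ι ι ℂ} (hc : c.IsHermitian) (hKc : ∀ z w, (K z)ᴴ * K w = c z w • 1)
    {ρ : Matrix n n ℂ} (hρ : ρ.PosSemidef) :
    vnEntropy (∑ z, K z * ρ * (K z)ᴴ) = ρ.trace.re * vnEntropy c + c.trace.re * vnEntropy ρ := by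
  obtain ⟨B, hB⟩ := CStarAlgebra.nonneg_iff_eq_mul_star_self.1 hρ.nonneg
  rw [star_eq_conjTranspose] at hB
  let M : Matrix m (ι × n) ℂ := of fun i x => (K x.1 * B) i x.2
  have hM : ∑ z, K z * ρ * (K z)ᴴ = M * Mᴴ := by
    ext i j
    have hblock : ∀ z, K z * ρ * (K z)ᴴ = (K z * B) * (K z * B)ᴴ := fun z => by
      rw [hB, conjTranspose_mul]
      simp only [Matrix.mul_assoc]
    rw [Matrix.sum_apply, mul_apply, Fintype.sum_prod_type]
    exact Finset.sum_congr rfl fun z _ => by rw [hblock]; rfl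
  have hM' : Mᴴ * M = c ⊗ₖ (Bᴴ * B) := by
    ext ⟨z, k⟩ ⟨w, l⟩
    have hblock : (K z * B)ᴴ * (K w * B) = c z w • (Bᴴ * B) := by
      rw [conjTranspose_mul, Matrix.mul_assoc, ← Matrix.mul_assoc (K z)ᴴ, hKc, smul_mul_assoc,
        Matrix.one_mul, mul_smul_comm]
    exact congrFun₂ hblock k l
  rw [hM, vnEntropy_mul_conjTranspose_self, hM',
    vnEntropy_kronecker hc (isHermitian_conjTranspose_mul_self B), trace_mul_comm,
    ← vnEntropy_mul_conjTranspose_self, ← hB]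

end KnillLaflamme

section Channel

variable {m n : Type*} [Fintype m] [Fintype n] [DecidableEq m] [DecidableEq n]

omit [DecidableEq m] in
lemma isCPTP_of_kraus {κ : Type*} [Fintype κ] {E : Matrix n n ℂ →ₗ[ℂ] Matrix m m ℂ}
    {K : κ → Matrix m n ℂ} (hE : ∀ ρ, E ρ = ∑ a, K a * ρ * (K a)ᴴ)
    (hK : ∑ a, (K a)ᴴ * K a = 1) : IsCPTP E := by
  refine ⟨Fintype.card κ, K ∘ (Fintype.equivFin κ).symm, fun ρ => ?_, ?_⟩
  · rw [hE, ← (Fintype.equivFin κ).symm.sum_comp]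
    rfl
  · rw [← hK, ← (Fintype.equivFin κ).symm.sum_comp]
    rfl

omit [DecidableEq m] in
lemma isCPTP_of_isometry {E : Matrix n n ℂ →ₗ[ℂ] Matrix m m ℂ} {V : Matrix m n ℂ}
    (hV : Vᴴ * V = 1) (hE : ∀ ρ, E ρ = V * ρ * Vᴴ) : IsCPTP E :=
  isCPTP_of_kraus (κ := Unit) (K := fun _ => V) (by simpa using hE) (by simpa using hV)

omit [DecidableEq m] in
lemma IsCPTP.isDensity {E : Matrix n n ℂ →ₗ[ℂ] Matrix m m ℂ} (hE : IsCPTP E) {ρ : Matrix n n ℂ}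
    (hρ : IsDensity ρ) : IsDensity (E ρ) := by
  obtain ⟨N, K, hEK, hK⟩ := hE
  rw [hEK]
  refine ⟨posSemidef_sum _ fun a _ => hρ.1.mul_mul_conjTranspose_same _, ?_⟩
  calc (∑ a, K a * ρ * (K a)ᴴ).trace = ((∑ a, (K a)ᴴ * K a) * ρ).trace := by
        simp only [trace_sum, Matrix.sum_mul, trace_mul_cycle (K _)]
    _ = 1 := by rw [hK, Matrix.one_mul, hρ.2]

omit [DecidableEq m] in
lemma IsCPTP.reindex_comp {l : Type*} [Fintype l] (e : m ≃ l)
    {E : Matrix n n ℂ →ₗ[ℂ] Matrix m m ℂ} (hE : IsCPTP E) :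
    IsCPTP ((reindexLinearEquiv ℂ ℂ e e).toLinearMap ∘ₗ E) := by
  obtain ⟨N, K, hEK, hK⟩ := hE
  refine isCPTP_of_kraus (K := fun a => (K a).submatrix e.symm id) (fun ρ => ?_) ?_
  · ext i j
    simp [hEK, Matrix.sum_apply, mul_apply]
  · simp only [conjTranspose_submatrix, submatrix_mul_equiv, submatrix_id_id, hK]

lemma IsCPTP.traceRight_comp {α β : Type*} [Fintype α] [Fintype β]
    {E : Matrix n n ℂ →ₗ[ℂ] Matrix (α × β) (α × β) ℂ} (hE : IsCPTP E) :
    IsCPTP (traceRight ∘ₗ E) := by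
  obtain ⟨N, K, hEK, hK⟩ := hE
  refine isCPTP_of_kraus (K := fun x : Fin N × β => (K x.1).submatrix (·, x.2) id)
    (fun ρ => ?_) ?_
  · ext i j
    simp only [LinearMap.comp_apply, traceRight_apply, hEK, Matrix.sum_apply,
      Fintype.sum_prod_type]
    rw [Finset.sum_comm]
    rfl
  · rw [← hK, Fintype.sum_prod_type]
    refine Finset.sum_congr rfl fun a _ => ?_
    ext i j
    simp only [Matrix.sum_apply, mul_apply, Fintype.sum_prod_type_right]
    rfl

theorem exists_vnEntropy_eq_add_of_reversible {E : Matrix n n ℂ →ₗ[ℂ] Matrix m m ℂ}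
    {R : Matrix m m ℂ →ₗ[ℂ] Matrix n n ℂ} (hE : IsCPTP E) (hR : IsCPTP R)
    (hRE : ∀ ρ, IsDensity ρ → R (E ρ) = ρ) :
    ∃ s : ℝ, ∀ ρ, IsDensity ρ → vnEntropy (E ρ) = s + vnEntropy ρ := by
  have hid : R ∘ₗ E = LinearMap.id := linearMap_ext_of_isDensity hRE
  obtain ⟨N, K, hEK, hK⟩ := hE
  obtain ⟨N', L, hRL, hL⟩ := hR
  obtain ⟨c, hc⟩ := exists_conjTranspose_mul_eq_smul_one (K := K) hL fun A => by
    rw [← hEK, ← hRL]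
    exact LinearMap.congr_fun hid A
  refine ⟨vnEntropy c, fun ρ hρ => ?_⟩
  obtain ⟨i⟩ : Nonempty n := by
    by_contra! hn
    simpa [trace] using hρ.2
  have hcK : ∀ z w, c z w = ((K z)ᴴ * K w) i i := fun z w => by simp [hc]
  have hherm : c.IsHermitian := by
    ext z w
    rw [conjTranspose_apply, hcK, hcK, ← conjTranspose_apply, conjTranspose_mul,
      conjTranspose_conjTranspose]
  have htr : c.trace = 1 := by
    simp only [trace, diag_apply, hcK]
    rw [← Matrix.sum_apply, hK, one_apply_eq]
  rw [hEK, vnEntropy_sum_conj_of_conjTranspose_mul_eq_smul_one hherm hc hρ.1, hρ.2, htr,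
    Complex.one_re, one_mul, one_mul]

end Channel

section Holevo

/-- The Holevo information `χ` of the outputs of the channel `E` on the ensemble of states `ρs`
with weights `p`. -/
def holevoInfo {ι m n : Type*} [Fintype ι] [Fintype m] [DecidableEq m]
    (E : Matrix n n ℂ →ₗ[ℂ] Matrix m m ℂ) (p : ι → ℝ) (ρs : ι → Matrix n n ℂ) : ℝ :=
  vnEntropy (E (∑ i, p i • ρs i)) - ∑ i, p i * vnEntropy (E (ρs i))

variable {ι m n : Type*} [Fintype ι] [Fintype m] [Fintype n] [DecidableEq m]
  {E : Matrix n n ℂ →ₗ[ℂ] Matrix m m ℂ} {p : ι → ℝ} {ρs : ι → Matrix n n ℂ}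

lemma holevoInfo_eq_of_reversible [DecidableEq n] {R : Matrix m m ℂ →ₗ[ℂ] Matrix n n ℂ}
    (hE : IsCPTP E) (hR : IsCPTP R) (hRE : ∀ ρ, IsDensity ρ → R (E ρ) = ρ) (hp : ∀ i, 0 ≤ p i)
    (hp1 : ∑ i, p i = 1) (hρs : ∀ i, IsDensity (ρs i)) :
    holevoInfo E p ρs = holevoInfo LinearMap.id p ρs := by
  obtain ⟨s, hs⟩ := exists_vnEntropy_eq_add_of_reversible hE hR hRE
  simp only [holevoInfo, hs _ (IsDensity.sum_smul hp hp1 hρs), fun i => hs _ (hρs i), mul_add,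
    Finset.sum_add_distrib, ← Finset.sum_mul, hp1, LinearMap.id_apply]
  ring

lemma holevoInfo_eq_zero_of_const {ρ₀ : Matrix m m ℂ} (hE : ∀ ρ, IsDensity ρ → E ρ = ρ₀)
    (hp : ∀ i, 0 ≤ p i) (hp1 : ∑ i, p i = 1) (hρs : ∀ i, IsDensity (ρs i)) :
    holevoInfo E p ρs = 0 := by
  simp only [holevoInfo, hE _ (IsDensity.sum_smul hp hp1 hρs), fun i => hE _ (hρs i),
    ← Finset.sum_mul, hp1, one_mul, sub_self]

end Holevo

section SecretSharing

/-- The reduced channel `W_X = Tr_{N∖X} ∘ W_N` onto the shares in `X`. -/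
def reducedChannel
    (W : Matrix H H ℂ →ₗ[ℂ] Matrix ((i : Fin nn) → d i) ((i : Fin nn) → d i) ℂ)
    (X : Finset (Fin nn)) :
    Matrix H H ℂ →ₗ[ℂ] Matrix ((i : {i // i ∈ X}) → d i) ((i : {i // i ∈ X}) → d i) ℂ :=
  traceRight ∘ₗ (reindexLinearEquiv ℂ ℂ (Equiv.piEquivPiSubtypeProd (· ∈ X) d)
    (Equiv.piEquivPiSubtypeProd (· ∈ X) d)).toLinearMap ∘ₗ W

variable {W : Matrix H H ℂ →ₗ[ℂ] Matrix ((i : Fin nn) → d i) ((i : Fin nn) → d i) ℂ}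
  {X Y : Finset (Fin nn)} {ι : Type*} [Fintype ι] {p : ι → ℝ} {ρs : ι → Matrix H H ℂ}

omit [∀ i, DecidableEq (d i)] [Fintype H] [DecidableEq H] in
lemma reducedChannel_apply (ρ : Matrix H H ℂ) :
    reducedChannel W X ρ = ptraceSubset X (W ρ) :=
  (ptraceSubset_eq_traceRight X (W ρ)).symm

omit [∀ i, DecidableEq (d i)] in
lemma IsCPTP.reducedChannel (hW : IsCPTP W) (X : Finset (Fin nn)) :
    IsCPTP (reducedChannel W X) :=
  (hW.reindex_comp _).traceRight_comp

lemma Qualified.holevoInfo_reducedChannel (hX : Qualified W X) (hW : IsCPTP W)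
    (hp : ∀ i, 0 ≤ p i) (hp1 : ∑ i, p i = 1) (hρs : ∀ i, IsDensity (ρs i)) :
    holevoInfo (reducedChannel W X) p ρs = holevoInfo LinearMap.id p ρs := by
  obtain ⟨R, hR, hRW⟩ := hX
  refine holevoInfo_eq_of_reversible (hW.reducedChannel X) hR (fun ρ hρ => ?_) hp hp1 hρs
  rw [reducedChannel_apply, hRW ρ hρ]

omit [DecidableEq H] in
lemma Forbidden.holevoInfo_reducedChannel (hX : Forbidden W X) (hp : ∀ i, 0 ≤ p i)
    (hp1 : ∑ i, p i = 1) (hρs : ∀ i, IsDensity (ρs i)) :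
    holevoInfo (reducedChannel W X) p ρs = 0 := by
  obtain ⟨ρ₀, -, hW⟩ := hX
  refine holevoInfo_eq_zero_of_const (ρ₀ := ρ₀) (fun ρ hρ => ?_) hp hp1 hρs
  rw [reducedChannel_apply, hW ρ hρ]

theorem stmt_15_general (hW : IsCPTP W) (hXY : Disjoint X Y) (hQ : Qualified W (X ∪ Y))
    (hF : Forbidden W Y) (hp : ∀ i, 0 ≤ p i) (hp1 : ∑ i, p i = 1)
    (hρs : ∀ i, IsDensity (ρs i)) :
    vnEntropy (∑ j, p j • ρs j) - ∑ i, p i * vnEntropy (ρs i) ≤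
      vnEntropy (ptraceSubset X (W (∑ j, p j • ρs j))) -
        ∑ i, p i *
          (vnEntropy (ptraceSubset (X ∪ Y) (W (ρs i))) -
            vnEntropy (ptraceSubset Y (W (ρs i)))) := by
  have hpreserved := hQ.holevoInfo_reducedChannel hW hp hp1 hρs
  have hvanishing := hF.holevoInfo_reducedChannel hp hp1 hρs
  have hsubadditive :=
    vnEntropy_ptraceSubset_union_le hXY (hW.isDensity (IsDensity.sum_smul hp hp1 hρs))
  simp only [holevoInfo, reducedChannel_apply, LinearMap.id_apply] at hpreserved hvanishing
  simp only [mul_sub, Finset.sum_sub_distrib]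
  linarith

end SecretSharing

/-- For a pure-state QSS scheme `W(ρ) = VρV*`, disjoint subsets `X, Y` of shares with
`X ∪ Y` qualified and `Y` forbidden, and any (finitely supported) probability measure
`μ = (p, ρs)` on pure states with barycenter `σ_μ`, one has
`H(σ_μ) ≤ H(W_X(σ_μ)) - E_μ[H_ρ(W_X | W_Y)]`, where
`H_ρ(W_X|W_Y) = H(W_{X∪Y}(ρ)) - H(W_Y(ρ))`. -/
theorem stmt_15
    (W : Matrix H H ℂ →ₗ[ℂ] Matrix ((i : Fin nn) → d i) ((i : Fin nn) → d i) ℂ)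
    (V : Matrix ((i : Fin nn) → d i) H ℂ) (hV : Vᴴ * V = 1)
    (hWV : ∀ ρ, W ρ = V * ρ * Vᴴ)
    (X Y : Finset (Fin nn)) (hXY : Disjoint X Y)
    (hQ : Qualified W (X ∪ Y)) (hF : Forbidden W Y)
    {ι : Type*} [Fintype ι] (p : ι → ℝ) (hp : ∀ i, 0 ≤ p i) (hp1 : ∑ i, p i = 1)
    (ρs : ι → Matrix H H ℂ) (hρs : ∀ i, IsPure (ρs i)) :
    vnEntropy (∑ j, p j • ρs j) ≤
      vnEntropy (ptraceSubset X (W (∑ j, p j • ρs j))) -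
        ∑ i, p i *
          (vnEntropy (ptraceSubset (X ∪ Y) (W (ρs i))) -
            vnEntropy (ptraceSubset Y (W (ρs i)))) := by
  have hpure : ∀ i, vnEntropy (ρs i) = 0 := fun i =>
    vnEntropy_eq_zero_of_isIdempotentElem (hρs i).1.1.isHermitian (hρs i).2
  simpa [hpure] using
    stmt_15_general (isCPTP_of_isometry hV hWV) hXY hQ hF hp hp1 fun i => (hρs i).1
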